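/- For every z > 2, the quantity R₂₂ = Σᵢ₌₁ⁿ ∫_{−∞}^1 E[(W̄⁽ⁱ⁾ + x̄ᵢ) f_z(W̄⁽ⁱ⁾ + x̄ᵢ) − (W̄⁽ⁱ⁾ + t) f_z(W̄⁽ⁱ⁾ + t)] K̄ᵢ(t) dt satisfies |R₂₂| ≤ (103.2 + 80 e^{e² − 2}/√(2π)) · e^{−z/2} · (β₂ + β₃). -/

import Mathlib

open MeasureTheory ProbabilityTheory Real

/-- The standard normal cumulative distribution function. -/
noncomputable def Phi (z : ℝ) : ℝ :=
  (Real.sqrt (2 * Real.pi))⁻¹ * ∫ u in Set.Iic z, Real.exp (-u ^ 2 / 2)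

/-- The bounded solution `f_z` of the Stein equation
`f'(w) - w f(w) = 1{w ≤ z} - Φ(z)`. -/
noncomputable def fz (z w : ℝ) : ℝ :=
  if w ≤ z then Real.sqrt (2 * Real.pi) * Real.exp (w ^ 2 / 2) * Phi w * (1 - Phi z)
  else Real.sqrt (2 * Real.pi) * Real.exp (w ^ 2 / 2) * Phi z * (1 - Phi w)

/-- The derivative `f_z'`, expressed via the Stein equation. -/
noncomputable def fz' (z w : ℝ) : ℝ :=
  w * fz z w + (if w ≤ z then 1 else 0) - Phi z

/-- The truncation `x̄ᵢ = ξᵢ 1{ξᵢ ≤ 1}`. -/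
noncomputable def xbar {Ω : Type*} {n : ℕ} (ξ : Fin n → Ω → ℝ) (i : Fin n) (ω : Ω) : ℝ :=
  if ξ i ω ≤ 1 then ξ i ω else 0

/-- `W̄ = ∑ᵢ x̄ᵢ`. -/
noncomputable def Wbar {Ω : Type*} {n : ℕ} (ξ : Fin n → Ω → ℝ) (ω : Ω) : ℝ :=
  ∑ i, xbar ξ i ω

/-- `W̄⁽ⁱ⁾ = W̄ - x̄ᵢ`. -/
noncomputable def Wbari {Ω : Type*} {n : ℕ} (ξ : Fin n → Ω → ℝ) (i : Fin n) (ω : Ω) : ℝ :=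
  Wbar ξ ω - xbar ξ i ω

/-- `K̄ᵢ(t) = E[x̄ᵢ (1{0 ≤ t ≤ x̄ᵢ} - 1{x̄ᵢ ≤ t < 0})]`. -/
noncomputable def Kbar {Ω : Type*} [MeasureSpace Ω] {n : ℕ} (ξ : Fin n → Ω → ℝ)
    (i : Fin n) (t : ℝ) : ℝ :=
  ∫ ω, xbar ξ i ω * ((if 0 ≤ t ∧ t ≤ xbar ξ i ω then (1 : ℝ) else 0)
    - (if xbar ξ i ω ≤ t ∧ t < 0 then (1 : ℝ) else 0))

/-- `β₂ = ∑ᵢ E[ξᵢ² 1{|ξᵢ| > 1}]`. -/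
noncomputable def beta2 {Ω : Type*} [MeasureSpace Ω] {n : ℕ} (ξ : Fin n → Ω → ℝ) : ℝ :=
  ∑ i, ∫ ω, (if 1 < |ξ i ω| then (ξ i ω) ^ 2 else 0)

/-- `β₃ = ∑ᵢ E[|ξᵢ|³ 1{|ξᵢ| ≤ 1}]`. -/
noncomputable def beta3 {Ω : Type*} [MeasureSpace Ω] {n : ℕ} (ξ : Fin n → Ω → ℝ) : ℝ :=
  ∑ i, ∫ ω, (if |ξ i ω| ≤ 1 then |ξ i ω| ^ 3 else 0)

/-!
On either side of `z`, the function `w * f_z(w)` is a constant multiple of `w ↦ w * Φ(w) / φ(w)` at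
`±w`. Nonnegativity of `∫_{u ≤ w} (w - u)^k e^{-u²/2} du` for `k = 1, 2` controls this function and
shows that its derivative is nonnegative; with the Gaussian decay of `1 - Φ(z)`, both `w * f_z(w)`
and its slope are at most a constant times `e^{-z/2} (1 + e^w)`. Hence
`|a f_z(a) - b f_z(b)| ≤ 5 e^{-z/2} (1 + e^M) min(1, |a - b|)` for `a, b ≤ M`.

Take `a = W̄⁽ⁱ⁾ + x̄ᵢ`, `b = W̄⁽ⁱ⁾ + t` and `M = W̄⁽ⁱ⁾ + 1`. As `W̄⁽ⁱ⁾` is independent of `x̄ᵢ`, the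
expectation factors, and `E e^{W̄⁽ⁱ⁾} ≤ e` because `e^x ≤ 1 + x + x²` for `x ≤ 1`. Integrating
against `K̄ᵢ` leaves `E[(E Y + Y) x̄ᵢ²]` with `Y = min(1, |x̄ᵢ|)`. Since `Y` and `x̄ᵢ²` are both
increasing in `|x̄ᵢ|`, they are positively correlated, so this is at most `2 E[Y x̄ᵢ²]`, and
`Y x̄ᵢ² ≤ ξᵢ² 1{|ξᵢ| > 1} + |ξᵢ|³ 1{|ξᵢ| ≤ 1}`.
-/

section Gaussian

open Filter Set Topology

lemma integrable_pow_mul_exp_neg_sq_div_two (k : ℕ) :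
    Integrable fun u : ℝ => u ^ k * exp (-u ^ 2 / 2) := by
  have hk : (-1 : ℝ) < k := by linarith [k.cast_nonneg (α := ℝ)]
  refine (integrable_rpow_mul_exp_neg_mul_sq one_half_pos hk).congr (.of_forall fun u => ?_)
  simp only [rpow_natCast]
  ring_nf

lemma integrable_exp_neg_sq_div_two : Integrable fun u : ℝ => exp (-u ^ 2 / 2) := by
  simpa using integrable_pow_mul_exp_neg_sq_div_two 0

lemma integral_exp_neg_sq_div_two : ∫ u : ℝ, exp (-u ^ 2 / 2) = √(2 * π) := by
  rw [show 2 * π = π / (1 / 2) by ring, ← integral_gaussian]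
  ring_nf

lemma tendsto_pow_mul_exp_neg_sq_div_two_atBot (k : ℕ) :
    Tendsto (fun u : ℝ => u ^ k * exp (-u ^ 2 / 2)) atBot (𝓝 0) := by
  have hcocompact := tendsto_rpow_abs_mul_exp_neg_mul_sq_cocompact one_half_pos (k : ℝ)
  refine squeeze_zero_norm (fun u => le_of_eq ?_) (hcocompact.mono_left atBot_le_cocompact)
  rw [norm_mul, norm_pow, norm_eq_abs, norm_of_nonneg (exp_pos _).le, rpow_natCast]
  ring_nf

lemma hasDerivAt_exp_neg_sq_div_two (u : ℝ) :
    HasDerivAt (fun u : ℝ => exp (-u ^ 2 / 2)) (-(u * exp (-u ^ 2 / 2))) u := by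
  refine ((hasDerivAt_pow 2 u).fun_neg.div_const 2).exp.congr_deriv ?_
  push_cast
  ring

lemma integral_Iic_mul_exp_neg_sq_div_two (w : ℝ) :
    ∫ u in Iic w, u * exp (-u ^ 2 / 2) = -exp (-w ^ 2 / 2) := by
  have hint : Integrable fun u : ℝ => u * exp (-u ^ 2 / 2) := by
    simpa using integrable_pow_mul_exp_neg_sq_div_two 1
  have hlim : Tendsto (fun u : ℝ => exp (-u ^ 2 / 2)) atBot (𝓝 0) := by
    simpa using tendsto_pow_mul_exp_neg_sq_div_two_atBot 0
  have hftc := integral_Iic_of_hasDerivAt_of_tendsto' (a := w)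
    (fun u _ => hasDerivAt_exp_neg_sq_div_two u) hint.neg.integrableOn hlim
  rw [integral_neg, sub_zero] at hftc
  rw [← hftc, neg_neg]

lemma integral_Iic_sq_mul_exp_neg_sq_div_two (w : ℝ) :
    ∫ u in Iic w, u ^ 2 * exp (-u ^ 2 / 2)
      = (∫ u in Iic w, exp (-u ^ 2 / 2)) - w * exp (-w ^ 2 / 2) := by
  have hderiv (u : ℝ) : HasDerivAt (fun u : ℝ => u * exp (-u ^ 2 / 2))
      (exp (-u ^ 2 / 2) - u ^ 2 * exp (-u ^ 2 / 2)) u :=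
    ((hasDerivAt_id' u).fun_mul (hasDerivAt_exp_neg_sq_div_two u)).congr_deriv (by ring)
  have hlim : Tendsto (fun u : ℝ => u * exp (-u ^ 2 / 2)) atBot (𝓝 0) := by
    simpa using tendsto_pow_mul_exp_neg_sq_div_two_atBot 1
  have hftc := integral_Iic_of_hasDerivAt_of_tendsto' (a := w) (fun u _ => hderiv u)
    (integrable_exp_neg_sq_div_two.sub (integrable_pow_mul_exp_neg_sq_div_two 2)).integrableOn hlim
  rw [integral_sub integrable_exp_neg_sq_div_two.integrableOn
    (integrable_pow_mul_exp_neg_sq_div_two 2).integrableOn] at hftc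
  linarith

lemma integral_Iic_sub_mul_exp_neg_sq_div_two (w : ℝ) :
    ∫ u in Iic w, (w - u) * exp (-u ^ 2 / 2)
      = w * (∫ u in Iic w, exp (-u ^ 2 / 2)) + exp (-w ^ 2 / 2) := by
  have hint : IntegrableOn (fun u : ℝ => u * exp (-u ^ 2 / 2)) (Iic w) := by
    simpa using (integrable_pow_mul_exp_neg_sq_div_two 1).integrableOn
  simp_rw [sub_mul]
  rw [integral_sub (integrable_exp_neg_sq_div_two.integrableOn.const_mul w) hint,
    integral_const_mul, integral_Iic_mul_exp_neg_sq_div_two, sub_neg_eq_add]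

lemma integral_Iic_sub_sq_mul_exp_neg_sq_div_two (w : ℝ) :
    ∫ u in Iic w, (w - u) ^ 2 * exp (-u ^ 2 / 2)
      = (1 + w ^ 2) * (∫ u in Iic w, exp (-u ^ 2 / 2)) + w * exp (-w ^ 2 / 2) := by
  have hint_const : IntegrableOn (fun u : ℝ => w ^ 2 * exp (-u ^ 2 / 2)) (Iic w) :=
    integrable_exp_neg_sq_div_two.integrableOn.const_mul _
  have hint_id : IntegrableOn (fun u : ℝ => 2 * w * (u * exp (-u ^ 2 / 2))) (Iic w) := by
    simpa [IntegrableOn] using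
      (integrable_pow_mul_exp_neg_sq_div_two 1).integrableOn.const_mul (2 * w)
  have hint_linear : IntegrableOn
      (fun u : ℝ => w ^ 2 * exp (-u ^ 2 / 2) - 2 * w * (u * exp (-u ^ 2 / 2))) (Iic w) :=
    hint_const.sub hint_id
  have hexpand (u : ℝ) : (w - u) ^ 2 * exp (-u ^ 2 / 2)
      = w ^ 2 * exp (-u ^ 2 / 2) - 2 * w * (u * exp (-u ^ 2 / 2))
        + u ^ 2 * exp (-u ^ 2 / 2) := by ring
  simp_rw [hexpand]
  rw [integral_add hint_linear (integrable_pow_mul_exp_neg_sq_div_two 2).integrableOn,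
    integral_sub hint_const hint_id, integral_const_mul, integral_const_mul,
    integral_Iic_mul_exp_neg_sq_div_two, integral_Iic_sq_mul_exp_neg_sq_div_two]
  ring

lemma sqrt_two_pi_mul_Phi (w : ℝ) : √(2 * π) * Phi w = ∫ u in Iic w, exp (-u ^ 2 / 2) :=
  mul_inv_cancel_left₀ (by positivity) _

lemma Phi_nonneg (w : ℝ) : 0 ≤ Phi w :=
  mul_nonneg (by positivity) (integral_nonneg fun _ => (exp_pos _).le)

lemma one_sub_Phi (w : ℝ) : 1 - Phi w = Phi (-w) := by
  have hpos : 0 < √(2 * π) := by positivity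
  have hreflect : √(2 * π) * Phi (-w) = ∫ u in Ioi w, exp (-u ^ 2 / 2) := by
    rw [sqrt_two_pi_mul_Phi, ← integral_comp_neg_Ioi]
    simp only [neg_sq]
  have hsplit := integral_add_compl (measurableSet_Iic (a := w)) integrable_exp_neg_sq_div_two
  rw [compl_Iic, ← hreflect, ← sqrt_two_pi_mul_Phi, integral_exp_neg_sq_div_two] at hsplit
  exact mul_left_cancel₀ hpos.ne' (by linarith)

lemma Phi_le_one (w : ℝ) : Phi w ≤ 1 := by
  linarith [one_sub_Phi w, Phi_nonneg (-w)]

lemma hasDerivAt_Phi (w : ℝ) : HasDerivAt Phi ((√(2 * π))⁻¹ * exp (-w ^ 2 / 2)) w := by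
  have hcont : Continuous fun u : ℝ => exp (-u ^ 2 / 2) := by fun_prop
  have hsplit : (fun x => ∫ u in Iic x, exp (-u ^ 2 / 2))
      = fun x => (∫ u in Iic 0, exp (-u ^ 2 / 2)) + ∫ u in (0 : ℝ)..x, exp (-u ^ 2 / 2) := by
    funext x
    rw [← intervalIntegral.integral_Iic_sub_Iic integrable_exp_neg_sq_div_two.integrableOn
      integrable_exp_neg_sq_div_two.integrableOn]
    ring
  refine HasDerivAt.const_mul _ ?_
  rw [hsplit]
  exact (intervalIntegral.integral_hasDerivAt_right (hcont.intervalIntegrable _ _)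
    (hcont.stronglyMeasurableAtFilter _ _) hcont.continuousAt).const_add _

end Gaussian

section MillsRatio

/-- The ratio `Φ(w) / φ(w)` of the standard normal distribution function to its density; it is the
Mills ratio `(1 - Φ(x)) / φ(x)` at `x = -w`. The two branches of `f_z` are multiples of it. -/
noncomputable def millsRatio (w : ℝ) : ℝ := √(2 * π) * exp (w ^ 2 / 2) * Phi w

/-- The derivative of `w ↦ w * millsRatio w`. -/
noncomputable def millsSlope (w : ℝ) : ℝ := (1 + w ^ 2) * millsRatio w + w

lemma millsRatio_nonneg (w : ℝ) : 0 ≤ millsRatio w :=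
  mul_nonneg (by positivity) (Phi_nonneg w)

lemma exp_sq_div_two_mul_exp_neg (w : ℝ) : exp (w ^ 2 / 2) * exp (-w ^ 2 / 2) = 1 := by
  rw [← exp_add, ← exp_zero]
  ring_nf

lemma sqrt_two_pi_mul_Phi_eq_exp_mul_millsRatio (w : ℝ) :
    √(2 * π) * Phi w = exp (-w ^ 2 / 2) * millsRatio w := by
  rw [millsRatio]
  linear_combination -(√(2 * π) * Phi w) * exp_sq_div_two_mul_exp_neg w

lemma mul_millsRatio_add_one_nonneg (w : ℝ) : 0 ≤ w * millsRatio w + 1 := by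
  have hint : 0 ≤ w * (√(2 * π) * Phi w) + exp (-w ^ 2 / 2) := by
    rw [sqrt_two_pi_mul_Phi, ← integral_Iic_sub_mul_exp_neg_sq_div_two]
    exact setIntegral_nonneg measurableSet_Iic fun u hu =>
      mul_nonneg (sub_nonneg.2 hu) (exp_pos _).le
  rw [sqrt_two_pi_mul_Phi_eq_exp_mul_millsRatio] at hint
  exact nonneg_of_mul_nonneg_right (by linarith) (exp_pos (-w ^ 2 / 2))

lemma millsSlope_nonneg (w : ℝ) : 0 ≤ millsSlope w := by
  have hint : 0 ≤ (1 + w ^ 2) * (√(2 * π) * Phi w) + w * exp (-w ^ 2 / 2) := by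
    rw [sqrt_two_pi_mul_Phi, ← integral_Iic_sub_sq_mul_exp_neg_sq_div_two]
    exact integral_nonneg fun u => by positivity
  rw [sqrt_two_pi_mul_Phi_eq_exp_mul_millsRatio] at hint
  exact nonneg_of_mul_nonneg_right (by rw [millsSlope]; linarith) (exp_pos (-w ^ 2 / 2))

lemma hasDerivAt_millsRatio (w : ℝ) : HasDerivAt millsRatio (w * millsRatio w + 1) w := by
  have hexp : HasDerivAt (fun x : ℝ => exp (x ^ 2 / 2)) (exp (w ^ 2 / 2) * w) w :=
    ((hasDerivAt_pow 2 w).div_const 2).exp.congr_deriv (by push_cast; ring)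
  refine ((hexp.const_mul √(2 * π)).fun_mul (hasDerivAt_Phi w)).congr_deriv ?_
  have hcancel : √(2 * π) * (√(2 * π))⁻¹ = 1 := mul_inv_cancel₀ (by positivity)
  rw [millsRatio]
  linear_combination exp (w ^ 2 / 2) * exp (-w ^ 2 / 2) * hcancel + exp_sq_div_two_mul_exp_neg w

lemma hasDerivAt_mul_millsRatio (w : ℝ) :
    HasDerivAt (fun x => x * millsRatio x) (millsSlope w) w :=
  ((hasDerivAt_id' w).fun_mul (hasDerivAt_millsRatio w)).congr_deriv (by rw [millsSlope]; ring)

lemma monotone_millsRatio : Monotone millsRatio :=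
  monotone_of_hasDerivAt_nonneg hasDerivAt_millsRatio mul_millsRatio_add_one_nonneg

lemma millsRatio_le_of_nonpos {w : ℝ} (hw : w ≤ 0) : millsRatio w ≤ √(2 * π) / 2 := by
  have hPhi : Phi 0 = 1 / 2 := by linarith [neg_zero (G := ℝ) ▸ one_sub_Phi 0]
  calc millsRatio w ≤ millsRatio 0 := monotone_millsRatio hw
    _ = √(2 * π) / 2 := by simp [millsRatio, hPhi]; ring

lemma millsSlope_le_millsRatio_of_nonpos {w : ℝ} (hw : w ≤ 0) : millsSlope w ≤ millsRatio w := by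
  rw [millsSlope]
  nlinarith [mul_millsRatio_add_one_nonneg w]

lemma abs_mul_millsRatio_le_one_of_nonpos {w : ℝ} (hw : w ≤ 0) : |w * millsRatio w| ≤ 1 := by
  rw [abs_of_nonpos (mul_nonpos_of_nonpos_of_nonneg hw (millsRatio_nonneg w))]
  linarith [mul_millsRatio_add_one_nonneg w]

lemma millsRatio_le_sqrt_two_pi_mul_exp (w : ℝ) : millsRatio w ≤ √(2 * π) * exp (w ^ 2 / 2) :=
  mul_le_of_le_one_right (by positivity) (Phi_le_one w)

end MillsRatio

section SteinSolution

open Set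

lemma sqrt_two_pi_mem_Icc : √(2 * π) ∈ Icc 2 3 := by
  refine ⟨le_sqrt_of_sq_le ?_, (sqrt_le_left (by norm_num)).2 ?_⟩ <;>
    linarith [pi_gt_three, pi_lt_four]

lemma exp_half_le : exp (1 / 2) ≤ 5 / 3 := by
  have hsq : exp (1 / 2) ^ 2 = exp 1 := by rw [← exp_nat_mul]; norm_num
  exact (sq_le_sq₀ (exp_pos _).le (by norm_num)).1 (by linarith [exp_one_lt_d9])

lemma Phi_neg_le_exp_neg_sq_div_two {z : ℝ} (hz : 0 ≤ z) : Phi (-z) ≤ exp (-z ^ 2 / 2) / 2 := by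
  have hratio : √(2 * π) * Phi (-z) ≤ exp (-z ^ 2 / 2) * (√(2 * π) / 2) := by
    rw [sqrt_two_pi_mul_Phi_eq_exp_mul_millsRatio, neg_sq]
    gcongr
    exact millsRatio_le_of_nonpos (neg_nonpos.2 hz)
  exact le_of_mul_le_mul_left (by linarith) (by positivity : 0 < √(2 * π))

lemma Phi_neg_le_exp_neg_div_two (z : ℝ) : Phi (-z) ≤ exp (-z / 2) := by
  rcases le_total z 0 with hz | hz
  · exact (Phi_le_one _).trans (one_le_exp (by linarith))
  · calc Phi (-z) ≤ exp (-z ^ 2 / 2) / 2 := Phi_neg_le_exp_neg_sq_div_two hz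
      _ ≤ exp (1 / 2 + -z / 2) / 2 := by gcongr; nlinarith [sq_nonneg (z - 1)]
      _ = exp (1 / 2) / 2 * exp (-z / 2) := by rw [exp_add]; ring
      _ ≤ exp (-z / 2) := mul_le_of_le_one_left (exp_pos _).le (by linarith [exp_half_le])

lemma one_add_sq_mul_Phi_neg_le {z : ℝ} (hz : 0 ≤ z) :
    (1 + z ^ 2) * (√(2 * π) * Phi (-z)) ≤ 2 * exp (z / 2 - z ^ 2 / 2) := by
  have hratio : (1 + z ^ 2) * millsRatio (-z) ≤ 2 + z := by
    have hslope := millsSlope_le_millsRatio_of_nonpos (neg_nonpos.2 hz)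
    rw [millsSlope, neg_sq] at hslope
    linarith [millsRatio_le_of_nonpos (neg_nonpos.2 hz), sqrt_two_pi_mem_Icc.2]
  calc (1 + z ^ 2) * (√(2 * π) * Phi (-z))
      = (1 + z ^ 2) * millsRatio (-z) * exp (-z ^ 2 / 2) := by
        rw [sqrt_two_pi_mul_Phi_eq_exp_mul_millsRatio, neg_sq]; ring
    _ ≤ 2 * exp (z / 2) * exp (-z ^ 2 / 2) := by
        refine mul_le_mul_of_nonneg_right (hratio.trans ?_) (exp_pos _).le
        linarith [add_one_le_exp (z / 2)]
    _ = 2 * exp (z / 2 - z ^ 2 / 2) := by rw [mul_assoc, ← exp_add]; ring_nf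

lemma Phi_neg_mul_millsSlope_le {u z : ℝ} (hu : 0 ≤ u) (huz : u ≤ z) :
    Phi (-z) * millsSlope u ≤ 3 * exp (z / 2 + (u ^ 2 - z ^ 2) / 2) := by
  have hPhi := Phi_nonneg (-z)
  have hslope : millsSlope u ≤ 3 / 2 * ((1 + z ^ 2) * (√(2 * π) * exp (u ^ 2 / 2))) := by
    have hone : 1 ≤ √(2 * π) * exp (u ^ 2 / 2) :=
      one_le_mul_of_one_le_of_one_le (by linarith [sqrt_two_pi_mem_Icc.1])
        (one_le_exp (by positivity))
    calc millsSlope u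
        ≤ (1 + u ^ 2) * (√(2 * π) * exp (u ^ 2 / 2))
          + (1 + u ^ 2) / 2 * (√(2 * π) * exp (u ^ 2 / 2)) := by
          refine add_le_add ?_ ?_
          · gcongr
            exact millsRatio_le_sqrt_two_pi_mul_exp u
          · nlinarith [sq_nonneg (u - 1)]
      _ = 3 / 2 * ((1 + u ^ 2) * (√(2 * π) * exp (u ^ 2 / 2))) := by ring
      _ ≤ 3 / 2 * ((1 + z ^ 2) * (√(2 * π) * exp (u ^ 2 / 2))) := by gcongr
  calc Phi (-z) * millsSlope u
      ≤ Phi (-z) * (3 / 2 * ((1 + z ^ 2) * (√(2 * π) * exp (u ^ 2 / 2)))) := by gcongr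
    _ = 3 / 2 * exp (u ^ 2 / 2) * ((1 + z ^ 2) * (√(2 * π) * Phi (-z))) := by ring
    _ ≤ 3 / 2 * exp (u ^ 2 / 2) * (2 * exp (z / 2 - z ^ 2 / 2)) := by
        gcongr _ * ?_
        exact one_add_sq_mul_Phi_neg_le (hu.trans huz)
    _ = 3 * (exp (u ^ 2 / 2) * exp (z / 2 - z ^ 2 / 2)) := by ring
    _ = 3 * exp (z / 2 + (u ^ 2 - z ^ 2) / 2) := by rw [← exp_add]; ring_nf

lemma Phi_neg_mul_mul_millsRatio_le {u z : ℝ} (hu : 0 ≤ u) (huz : u ≤ z) :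
    Phi (-z) * (u * millsRatio u) ≤ exp ((u ^ 2 - z ^ 2) / 2) := by
  have hPhi := Phi_nonneg (-z)
  calc Phi (-z) * (u * millsRatio u)
      ≤ Phi (-z) * (z * (√(2 * π) * exp (u ^ 2 / 2))) := by
        gcongr
        exacts [millsRatio_nonneg u, hu.trans huz, millsRatio_le_sqrt_two_pi_mul_exp u]
    _ = z * millsRatio (-z) * (exp (u ^ 2 / 2) * exp (-z ^ 2 / 2)) := by
        have hPhi_eq := sqrt_two_pi_mul_Phi_eq_exp_mul_millsRatio (-z)
        rw [neg_sq] at hPhi_eq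
        linear_combination z * exp (u ^ 2 / 2) * hPhi_eq
    _ ≤ exp (u ^ 2 / 2) * exp (-z ^ 2 / 2) :=
        mul_le_of_le_one_left (by positivity) (by linarith [mul_millsRatio_add_one_nonneg (-z)])
    _ = exp ((u ^ 2 - z ^ 2) / 2) := by rw [← exp_add]; ring_nf

lemma exp_sq_sub_sq_div_two_le {u z : ℝ} (hu : 0 ≤ u) (huz : u ≤ z) :
    exp ((u ^ 2 - z ^ 2) / 2) ≤ 5 / 3 * exp (u - z) := by
  have hexponent : (u ^ 2 - z ^ 2) / 2 ≤ 1 / 2 + (u - z) := by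
    rcases le_total u 2 with h | h <;> nlinarith [sq_nonneg (z - 1)]
  calc exp ((u ^ 2 - z ^ 2) / 2) ≤ exp (1 / 2 + (u - z)) := exp_le_exp.2 hexponent
    _ = exp (1 / 2) * exp (u - z) := exp_add _ _
    _ ≤ 5 / 3 * exp (u - z) := by gcongr; exact exp_half_le

lemma Phi_neg_mul_millsSlope_le_of_nonpos {u : ℝ} (hu : u ≤ 0) (z : ℝ) :
    Phi (-z) * millsSlope u ≤ 2 * Phi (-z) := by
  have hslope : millsSlope u ≤ 2 := by
    linarith [millsSlope_le_millsRatio_of_nonpos hu, millsRatio_le_of_nonpos hu,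
      sqrt_two_pi_mem_Icc.2]
  nlinarith [Phi_nonneg (-z)]

lemma abs_Phi_neg_mul_mul_millsRatio_le_of_nonpos {u : ℝ} (hu : u ≤ 0) (z : ℝ) :
    |Phi (-z) * (u * millsRatio u)| ≤ Phi (-z) := by
  rw [abs_mul, abs_of_nonneg (Phi_nonneg _)]
  exact mul_le_of_le_one_right (Phi_nonneg _) (abs_mul_millsRatio_le_one_of_nonpos hu)

lemma one_le_exp_mul_one_add_exp_neg {u z : ℝ} (huz : u ≤ z) :
    1 ≤ exp (z / 2) * (1 + exp (-u)) := by
  rw [mul_one_add, ← exp_add]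
  rcases le_total 0 z with hz | hz
  · linarith [one_le_exp (by linarith : 0 ≤ z / 2), exp_pos (z / 2 + -u)]
  · linarith [one_le_exp (by linarith : 0 ≤ z / 2 + -u), exp_pos (z / 2)]

lemma Phi_neg_mul_millsSlope_le_decay {u z : ℝ} (huz : u ≤ z) :
    Phi (-z) * millsSlope u ≤ 5 * exp (-z / 2) * (1 + exp u) := by
  have hprod := mul_pos (exp_pos (-z / 2)) (exp_pos u)
  rcases le_total u 0 with hu | hu
  · linarith [Phi_neg_mul_millsSlope_le_of_nonpos hu z, Phi_neg_le_exp_neg_div_two z,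
      exp_pos (-z / 2)]
  · calc Phi (-z) * millsSlope u ≤ 3 * exp (z / 2 + (u ^ 2 - z ^ 2) / 2) :=
          Phi_neg_mul_millsSlope_le hu huz
      _ ≤ 3 * (exp (z / 2) * (5 / 3 * exp (u - z))) := by
          rw [exp_add]
          gcongr
          exact exp_sq_sub_sq_div_two_le hu huz
      _ = 5 * (exp (z / 2) * exp (u - z)) := by ring
      _ = 5 * (exp (-z / 2) * exp u) := by
          rw [← exp_add, ← exp_add]
          ring_nf
      _ ≤ 5 * exp (-z / 2) * (1 + exp u) := by linarith [exp_pos (-z / 2)]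

lemma Phi_neg_mul_millsSlope_le_growth {u z : ℝ} (huz : u ≤ z) :
    Phi (-z) * millsSlope u ≤ 5 * exp (z / 2) * (1 + exp (-u)) := by
  rcases le_total u 0 with hu | hu
  · linarith [Phi_neg_mul_millsSlope_le_of_nonpos hu z, Phi_le_one (-z),
      one_le_exp_mul_one_add_exp_neg huz]
  · calc Phi (-z) * millsSlope u ≤ 3 * exp (z / 2 + (u ^ 2 - z ^ 2) / 2) :=
          Phi_neg_mul_millsSlope_le hu huz
      _ ≤ 3 * exp (z / 2) := by gcongr; nlinarith
      _ ≤ 5 * exp (z / 2) * (1 + exp (-u)) := by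
          linarith [exp_pos (z / 2), mul_pos (exp_pos (z / 2)) (exp_pos (-u))]

lemma abs_Phi_neg_mul_mul_millsRatio_le_decay {u z : ℝ} (huz : u ≤ z) :
    |Phi (-z) * (u * millsRatio u)| ≤ 5 / 2 * exp (-z / 2) * (1 + exp u) := by
  have hprod := mul_pos (exp_pos (-z / 2)) (exp_pos u)
  rcases le_total u 0 with hu | hu
  · linarith [abs_Phi_neg_mul_mul_millsRatio_le_of_nonpos hu z, Phi_neg_le_exp_neg_div_two z,
      exp_pos (-z / 2)]
  · have hnonneg := mul_nonneg (Phi_nonneg (-z)) (mul_nonneg hu (millsRatio_nonneg u))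
    calc |Phi (-z) * (u * millsRatio u)| ≤ exp ((u ^ 2 - z ^ 2) / 2) :=
          (abs_of_nonneg hnonneg).trans_le (Phi_neg_mul_mul_millsRatio_le hu huz)
      _ ≤ 5 / 3 * exp (u - z) := exp_sq_sub_sq_div_two_le hu huz
      _ ≤ 5 / 3 * exp (-z / 2 + u) := by gcongr; linarith
      _ ≤ 5 / 2 * exp (-z / 2) * (1 + exp u) := by
          rw [exp_add]
          linarith [exp_pos (-z / 2)]

lemma abs_Phi_neg_mul_mul_millsRatio_le_one {u z : ℝ} (huz : u ≤ z) :
    |Phi (-z) * (u * millsRatio u)| ≤ 1 := by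
  rcases le_total u 0 with hu | hu
  · exact (abs_Phi_neg_mul_mul_millsRatio_le_of_nonpos hu z).trans (Phi_le_one _)
  · have hnonneg := mul_nonneg (Phi_nonneg (-z)) (mul_nonneg hu (millsRatio_nonneg u))
    rw [abs_of_nonneg hnonneg]
    exact (Phi_neg_mul_mul_millsRatio_le hu huz).trans (exp_le_one_iff.2 (by nlinarith))

lemma mul_fz_of_le {w z : ℝ} (h : w ≤ z) : w * fz z w = Phi (-z) * (w * millsRatio w) := by
  rw [fz, if_pos h, one_sub_Phi, millsRatio]
  ring

lemma mul_fz_of_ge {w z : ℝ} (h : z ≤ w) : w * fz z w = -(Phi z * (-w * millsRatio (-w))) := by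
  rcases h.eq_or_lt with rfl | h
  · rw [mul_fz_of_le le_rfl, millsRatio, millsRatio, neg_sq]
    ring
  · rw [fz, if_neg h.not_ge, one_sub_Phi, millsRatio, neg_sq]
    ring

lemma abs_mul_fz_le (z w : ℝ) : |w * fz z w| ≤ 5 / 2 * exp (-z / 2) * (1 + exp w) := by
  rcases le_total w z with h | h
  · rw [mul_fz_of_le h]
    exact abs_Phi_neg_mul_mul_millsRatio_le_decay h
  · have hone := abs_Phi_neg_mul_mul_millsRatio_le_one (neg_le_neg h)
    have hweight := one_le_exp_mul_one_add_exp_neg (neg_le_neg h)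
    rw [neg_neg] at hone hweight
    rw [mul_fz_of_ge h, abs_neg]
    linarith

lemma continuous_mul_millsRatio : Continuous fun w => w * millsRatio w :=
  continuous_iff_continuousAt.2 fun w => (hasDerivAt_mul_millsRatio w).continuousAt

lemma continuous_mul_fz (z : ℝ) : Continuous fun w => w * fz z w := by
  have hleft : ContinuousOn (fun w => w * fz z w) (Iic z) :=
    (continuous_mul_millsRatio.const_mul _).continuousOn.congr fun _ h => mul_fz_of_le h
  have hright : ContinuousOn (fun w => w * fz z w) (Ici z) :=
    ((continuous_mul_millsRatio.comp continuous_neg).const_mul _).neg.continuousOn.congr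
      fun _ h => mul_fz_of_ge h
  rw [← continuousOn_univ, ← Iic_union_Ici (a := z)]
  exact hleft.union_of_isClosed hright isClosed_Iic isClosed_Ici

/-- The right derivative of `w ↦ w * fz z w`, which has a corner at `z`. -/
noncomputable def mulFzSlope (z w : ℝ) : ℝ :=
  if w < z then Phi (-z) * millsSlope w else Phi z * millsSlope (-w)

lemma hasDerivWithinAt_mul_fz (z w : ℝ) :
    HasDerivWithinAt (fun w => w * fz z w) (mulFzSlope z w) (Ici w) w := by
  rw [mulFzSlope]
  split_ifs with h
  · refine ((hasDerivAt_mul_millsRatio w).const_mul (Phi (-z))).congr_of_eventuallyEq ?_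
      |>.hasDerivWithinAt
    filter_upwards [Iio_mem_nhds h] with x hx using mul_fz_of_le hx.le
  · have hreflect : HasDerivAt (fun x => -(Phi z * (-x * millsRatio (-x))))
        (Phi z * millsSlope (-w)) w :=
      (((hasDerivAt_mul_millsRatio (-w)).comp w (hasDerivAt_neg w)).const_mul (Phi z)).fun_neg
        |>.congr_deriv (by ring)
    exact hreflect.hasDerivWithinAt.congr (fun x hx => mul_fz_of_ge ((not_lt.1 h).trans hx))
      (mul_fz_of_ge (not_lt.1 h))

lemma abs_mulFzSlope_le (z w : ℝ) : |mulFzSlope z w| ≤ 5 * exp (-z / 2) * (1 + exp w) := by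
  rw [mulFzSlope]
  split_ifs with h
  · rw [abs_of_nonneg (mul_nonneg (Phi_nonneg _) (millsSlope_nonneg _))]
    exact Phi_neg_mul_millsSlope_le_decay h.le
  · rw [abs_of_nonneg (mul_nonneg (Phi_nonneg _) (millsSlope_nonneg _))]
    have hgrowth := Phi_neg_mul_millsSlope_le_growth (neg_le_neg (not_lt.1 h))
    rwa [neg_neg, neg_neg] at hgrowth

lemma abs_mul_fz_sub_mul_fz_le_mul_sub (z : ℝ) {a b : ℝ} (hab : a ≤ b) :
    |b * fz z b - a * fz z a| ≤ 5 * exp (-z / 2) * (1 + exp b) * (b - a) := by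
  refine norm_image_sub_le_of_norm_deriv_right_le_segment (continuous_mul_fz z).continuousOn
    (fun x _ => hasDerivWithinAt_mul_fz z x) (fun x hx => ?_) b (right_mem_Icc.2 hab)
  refine (abs_mulFzSlope_le z x).trans ?_
  gcongr
  exact hx.2.le

lemma abs_mul_fz_sub_mul_fz_le (z : ℝ) {a b M : ℝ} (ha : a ≤ M) (hb : b ≤ M) :
    |a * fz z a - b * fz z b| ≤ 5 * exp (-z / 2) * (1 + exp M) * min 1 |a - b| := by
  wlog hab : b ≤ a generalizing a b
  · rw [abs_sub_comm, abs_sub_comm a]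
    exact this hb ha (le_of_not_ge hab)
  rw [mul_min_of_nonneg _ _ (by positivity), mul_one]
  refine le_min ?_ ?_
  · calc |a * fz z a - b * fz z b| ≤ |a * fz z a| + |b * fz z b| := abs_sub _ _
      _ ≤ 5 / 2 * exp (-z / 2) * (1 + exp M) + 5 / 2 * exp (-z / 2) * (1 + exp M) := by
          refine add_le_add ((abs_mul_fz_le z a).trans ?_) ((abs_mul_fz_le z b).trans ?_) <;> gcongr
      _ = 5 * exp (-z / 2) * (1 + exp M) := by ring
  · rw [abs_of_nonneg (sub_nonneg.2 hab)]
    refine (abs_mul_fz_sub_mul_fz_le_mul_sub z hab).trans ?_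
    have := sub_nonneg.2 hab
    gcongr

end SteinSolution

section ExponentialMoment

variable {Ω ι : Type*} {mΩ : MeasurableSpace Ω} {μ : Measure Ω}

lemma exp_le_one_add_add_sq {x : ℝ} (hx : x ≤ 1) : exp x ≤ 1 + x + x ^ 2 := by
  rcases le_total (-1) x with hx' | hx'
  · linarith [(abs_le.1 (abs_exp_sub_one_sub_id_le (abs_le.2 ⟨hx', hx⟩))).2]
  · nlinarith [exp_le_one_iff.2 (by linarith : x ≤ 0)]

lemma mgf_one_le_exp_integral_sq [IsProbabilityMeasure μ] {X : Ω → ℝ} (hX : MemLp X 2 μ)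
    (hle : ∀ᵐ ω ∂μ, X ω ≤ 1) (hmean : ∫ ω, X ω ∂μ ≤ 0) : mgf X μ 1 ≤ exp (∫ ω, X ω ^ 2 ∂μ) := by
  have hint : Integrable X μ := hX.integrable one_le_two
  have hint_linear : Integrable (fun ω => 1 + X ω) μ := (integrable_const 1).add hint
  calc mgf X μ 1 ≤ ∫ ω, (1 + X ω + X ω ^ 2) ∂μ := by
        refine integral_mono_of_nonneg (.of_forall fun ω => (exp_pos _).le)
          (hint_linear.add hX.integrable_sq) ?_
        filter_upwards [hle] with ω hω
        simpa only [one_mul] using exp_le_one_add_add_sq hω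
    _ = 1 + ∫ ω, X ω ∂μ + ∫ ω, X ω ^ 2 ∂μ := by
        rw [integral_add hint_linear hX.integrable_sq, integral_add (integrable_const 1) hint,
          integral_const, probReal_univ, one_smul]
    _ ≤ exp (∫ ω, X ω ^ 2 ∂μ) := by linarith [add_one_le_exp (∫ ω, X ω ^ 2 ∂μ)]

lemma integral_exp_sum_le_exp_sum_integral_sq [IsProbabilityMeasure μ] {X : ι → Ω → ℝ}
    (hindep : iIndepFun X μ) (hX : ∀ i, MemLp (X i) 2 μ) (hle : ∀ i, ∀ᵐ ω ∂μ, X i ω ≤ 1)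
    (hmean : ∀ i, ∫ ω, X i ω ∂μ ≤ 0) (s : Finset ι) :
    ∫ ω, exp ((∑ i ∈ s, X i) ω) ∂μ ≤ exp (∑ i ∈ s, ∫ ω, X i ω ^ 2 ∂μ) := by
  calc ∫ ω, exp ((∑ i ∈ s, X i) ω) ∂μ = mgf (∑ i ∈ s, X i) μ 1 := by simp only [mgf, one_mul]
    _ = ∏ i ∈ s, mgf (X i) μ 1 := hindep.mgf_sum₀ (fun i => (hX i).aemeasurable) s
    _ ≤ ∏ i ∈ s, exp (∫ ω, X i ω ^ 2 ∂μ) :=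
        Finset.prod_le_prod (fun _ _ => mgf_nonneg)
          fun i _ => mgf_one_le_exp_integral_sq (hX i) (hle i) (hmean i)
    _ = exp (∑ i ∈ s, ∫ ω, X i ω ^ 2 ∂μ) := (exp_sum _ _).symm

lemma integrable_exp_sum_of_le_one [IsFiniteMeasure μ] {X : ι → Ω → ℝ}
    (hX : ∀ i, AEMeasurable (X i) μ)
    (hle : ∀ i, ∀ᵐ ω ∂μ, X i ω ≤ 1) (s : Finset ι) :
    Integrable (fun ω => exp ((∑ i ∈ s, X i) ω)) μ := by
  have hmeas : AEMeasurable (∑ i ∈ s, X i) μ := s.aemeasurable_sum fun i _ => hX i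
  refine .of_bound hmeas.exp.aestronglyMeasurable (exp (∑ _i ∈ s, 1)) ?_
  filter_upwards [(Finset.eventually_all s).2 fun i _ => hle i] with ω hω
  rw [norm_of_nonneg (exp_pos _).le, Finset.sum_apply]
  exact exp_le_exp.2 (Finset.sum_le_sum hω)

end ExponentialMoment

section TruncatedMoment

variable {Ω : Type*} {mΩ : MeasurableSpace Ω} {μ : Measure Ω} {X : Ω → ℝ}

lemma min_one_abs_nonneg (x : ℝ) : 0 ≤ min 1 |x| := le_min zero_le_one (abs_nonneg x)

lemma monotone_min_one : Monotone fun s : ℝ => min 1 s :=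
  fun _ _ h => min_le_min_left _ h

lemma min_one_abs_sub_le (s t : ℝ) : min 1 |s - t| ≤ min 1 |s| + min 1 |t| := by
  have := abs_sub s t
  rcases min_cases 1 |s| with hs | hs <;> rcases min_cases 1 |t| with ht | ht <;>
    rcases min_cases 1 |s - t| with hst | hst <;> linarith [abs_nonneg s, abs_nonneg t]

lemma integrable_min_one_abs [IsFiniteMeasure μ] (hX : AEMeasurable X μ) :
    Integrable (fun ω => min 1 |X ω|) μ := by
  refine .of_bound (by fun_prop) 1 (.of_forall fun ω => ?_)
  rw [norm_of_nonneg (min_one_abs_nonneg _)]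
  exact min_le_left _ _

lemma integrable_min_one_abs_mul_sq (hX : MemLp X 2 μ) :
    Integrable (fun ω => min 1 |X ω| * X ω ^ 2) μ := by
  have hmeas := hX.aemeasurable
  refine hX.integrable_sq.mono (by fun_prop) (.of_forall fun ω => ?_)
  rw [norm_mul, norm_of_nonneg (min_one_abs_nonneg _)]
  exact mul_le_of_le_one_left (norm_nonneg _) (min_le_left _ _)

-- `min 1 |x|` and `x ^ 2` both increase with `|x|`, and take the values `m`, `m ^ 2` at `|x| = m`.
lemma min_one_abs_sub_mul_sq_sub_sq_nonneg {m : ℝ} (hm : m ∈ Set.Icc 0 1) (x : ℝ) :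
    0 ≤ (min 1 |x| - m) * (x ^ 2 - m ^ 2) := by
  rw [← sq_abs x]
  rcases le_total m |x| with h | h
  · exact mul_nonneg (sub_nonneg.2 (le_min hm.2 h))
      (sub_nonneg.2 (pow_le_pow_left₀ hm.1 h 2))
  · exact mul_nonneg_of_nonpos_of_nonpos (sub_nonpos.2 ((min_le_right _ _).trans h))
      (sub_nonpos.2 (pow_le_pow_left₀ (abs_nonneg x) h 2))

lemma integral_min_one_abs_mul_integral_sq_le [IsProbabilityMeasure μ] (hX : MemLp X 2 μ) :
    (∫ ω, min 1 |X ω| ∂μ) * ∫ ω, X ω ^ 2 ∂μ ≤ ∫ ω, min 1 |X ω| * X ω ^ 2 ∂μ := by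
  have hint := integrable_min_one_abs hX.aemeasurable
  set m := ∫ ω, min 1 |X ω| ∂μ with hm
  have hm_mem : m ∈ Set.Icc 0 1 := by
    refine ⟨integral_nonneg fun ω => min_one_abs_nonneg _, ?_⟩
    simpa using integral_mono hint (integrable_const 1) fun ω => min_le_left 1 |X ω|
  have hint_lower : Integrable (fun ω => m * X ω ^ 2 + m ^ 2 * min 1 |X ω|) μ :=
    (hX.integrable_sq.const_mul m).add (hint.const_mul (m ^ 2))
  have hmono := integral_mono (hint_lower.sub (integrable_const (m ^ 3)))
    (integrable_min_one_abs_mul_sq hX) fun ω => by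
      simpa using by linarith [min_one_abs_sub_mul_sq_sub_sq_nonneg hm_mem (X ω)]
  simp only [Pi.sub_apply] at hmono
  rw [integral_sub hint_lower (integrable_const _),
    integral_add (hX.integrable_sq.const_mul m) (hint.const_mul (m ^ 2)), integral_const_mul,
    integral_const_mul, ← hm, integral_const, probReal_univ, one_smul] at hmono
  linarith

lemma integrable_ite_one_lt_abs_sq (hX : MemLp X 2 μ) :
    Integrable (fun ω => if 1 < |X ω| then X ω ^ 2 else 0) μ := by
  have hmeas : Measurable fun x : ℝ => if 1 < |x| then x ^ 2 else 0 :=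
    .ite (measurableSet_lt measurable_const measurable_abs) (by fun_prop) measurable_const
  refine hX.integrable_sq.mono
    (hmeas.comp_aemeasurable hX.aemeasurable).aestronglyMeasurable (.of_forall fun ω => ?_)
  split_ifs
  exacts [le_rfl, by simpa using sq_nonneg _]

lemma integrable_ite_abs_le_one_cube [IsFiniteMeasure μ] (hX : AEMeasurable X μ) :
    Integrable (fun ω => if |X ω| ≤ 1 then |X ω| ^ 3 else 0) μ := by
  have hmeas : Measurable fun x : ℝ => if |x| ≤ 1 then |x| ^ 3 else 0 :=
    .ite (measurableSet_le measurable_abs measurable_const) (by fun_prop) measurable_const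
  refine .of_bound (hmeas.comp_aemeasurable hX).aestronglyMeasurable 1 (.of_forall fun ω => ?_)
  split_ifs with h
  · simpa using pow_le_one₀ (abs_nonneg _) h
  · simp

end TruncatedMoment

section SteinKernel

open Set
open scoped ENNReal

variable {Ω : Type*} {mΩ : MeasurableSpace Ω} {μ : Measure Ω} {X : Ω → ℝ}

/-- The kernel `t ↦ E[X (1{0 ≤ t ≤ X} - 1{X ≤ t < 0})]` of a random variable `X`, which represents
`E[X (g(X) - g(0))]` as the integral of the derivative of `g` against it; `K̄ᵢ` is the kernel
of `x̄ᵢ`. -/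
noncomputable def steinKernel (μ : Measure Ω) (X : Ω → ℝ) (t : ℝ) : ℝ :=
  ∫ ω, X ω * ((if 0 ≤ t ∧ t ≤ X ω then (1 : ℝ) else 0)
    - (if X ω ≤ t ∧ t < 0 then (1 : ℝ) else 0)) ∂μ

lemma enorm_mul_ite_sub_ite_le (x t : ℝ) :
    ‖x * ((if 0 ≤ t ∧ t ≤ x then (1 : ℝ) else 0) - (if x ≤ t ∧ t < 0 then (1 : ℝ) else 0))‖ₑ
      ≤ (uIcc 0 x).indicator (fun _ => ‖x‖ₑ) t := by
  by_cases ht : t ∈ uIcc 0 x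
  · rw [indicator_of_mem ht, enorm_le_iff_norm_le, norm_mul]
    refine mul_le_of_le_one_right (norm_nonneg x) ?_
    split_ifs <;> norm_num
  · have hpos : ¬ (0 ≤ t ∧ t ≤ x) := fun h => ht (Icc_subset_uIcc h)
    have hneg : ¬ (x ≤ t ∧ t < 0) := fun h => ht (Icc_subset_uIcc' ⟨h.1, h.2.le⟩)
    simp [hpos, hneg]

lemma enorm_steinKernel_le (t : ℝ) :
    ‖steinKernel μ X t‖ₑ ≤ ∫⁻ ω, (uIcc 0 (X ω)).indicator (fun _ => ‖X ω‖ₑ) t ∂μ :=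
  (enorm_integral_le_lintegral_enorm _).trans
    (lintegral_mono fun ω => enorm_mul_ite_sub_ite_le (X ω) t)

lemma measurable_indicator_uIcc :
    Measurable fun p : ℝ × ℝ => (uIcc 0 p.2).indicator (fun _ => ‖p.2‖ₑ) p.1 := by
  have hset : MeasurableSet {p : ℝ × ℝ | p.1 ∈ uIcc 0 p.2} :=
    (measurableSet_le (by fun_prop) measurable_fst).inter
      (measurableSet_le measurable_fst (by fun_prop))
  exact measurable_snd.enorm.indicator hset

lemma lintegral_mul_indicator_uIcc_le {φ : ℝ → ℝ≥0∞} (hφ : Monotone φ) (x : ℝ) :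
    ∫⁻ t, φ |t| * (uIcc 0 x).indicator (fun _ => ‖x‖ₑ) t ≤ φ |x| * ‖x‖ₑ ^ 2 := by
  calc ∫⁻ t, φ |t| * (uIcc 0 x).indicator (fun _ => ‖x‖ₑ) t
      ≤ ∫⁻ t, (uIcc 0 x).indicator (fun _ => φ |x| * ‖x‖ₑ) t := by
        refine lintegral_mono fun t => ?_
        by_cases ht : t ∈ uIcc 0 x
        · rw [indicator_of_mem ht, indicator_of_mem ht]
          gcongr
          refine hφ ?_
          simpa using abs_sub_left_of_mem_uIcc ht
        · simp [ht]
    _ = φ |x| * ‖x‖ₑ ^ 2 := by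
        rw [lintegral_indicator_const measurableSet_uIcc, Real.volume_interval, sub_zero,
          ← enorm_eq_ofReal_abs]
        ring

-- Tonelli, the inner integral being over the segment from `0` to `X`, of length `|X|`.
lemma lintegral_mul_enorm_steinKernel_le [SFinite μ] {φ : ℝ → ℝ≥0∞} (hφ : Monotone φ)
    (hX : AEMeasurable X μ) :
    ∫⁻ t, φ |t| * ‖steinKernel μ X t‖ₑ ≤ ∫⁻ ω, φ |X ω| * ‖X ω‖ₑ ^ 2 ∂μ := by
  have hmeas_slice (t : ℝ) :
      AEMeasurable (fun ω => (uIcc 0 (X ω)).indicator (fun _ => ‖X ω‖ₑ) t) μ :=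
    measurable_indicator_uIcc.comp_aemeasurable (aemeasurable_const.prodMk hX)
  have hmeas_joint : AEMeasurable (fun p : ℝ × Ω =>
      φ |p.1| * (uIcc 0 (X p.2)).indicator (fun _ => ‖X p.2‖ₑ) p.1) (volume.prod μ) :=
    (hφ.measurable.comp measurable_fst.abs).aemeasurable.mul
      (measurable_indicator_uIcc.comp_aemeasurable (measurable_fst.aemeasurable.prodMk hX.comp_snd))
  calc ∫⁻ t, φ |t| * ‖steinKernel μ X t‖ₑ
      ≤ ∫⁻ t, ∫⁻ ω, φ |t| * (uIcc 0 (X ω)).indicator (fun _ => ‖X ω‖ₑ) t ∂μ := by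
        refine lintegral_mono fun t => ?_
        rw [lintegral_const_mul'' _ (hmeas_slice t)]
        gcongr
        exact enorm_steinKernel_le t
    _ = ∫⁻ ω, (∫⁻ t, φ |t| * (uIcc 0 (X ω)).indicator (fun _ => ‖X ω‖ₑ) t) ∂μ :=
        lintegral_lintegral_swap hmeas_joint
    _ ≤ ∫⁻ ω, φ |X ω| * ‖X ω‖ₑ ^ 2 ∂μ :=
        lintegral_mono fun ω => lintegral_mul_indicator_uIcc_le hφ (X ω)

lemma abs_setIntegral_mul_steinKernel_le [SFinite μ] {φ F : ℝ → ℝ} {S : Set ℝ}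
    (hφ : Monotone φ) (hφ0 : 0 ≤ φ 0) (hX : AEMeasurable X μ)
    (hint : Integrable (fun ω => φ |X ω| * X ω ^ 2) μ) (hS : MeasurableSet S)
    (hF : ∀ t ∈ S, |F t| ≤ φ |t|) :
    |∫ t in S, F t * steinKernel μ X t| ≤ ∫ ω, φ |X ω| * X ω ^ 2 ∂μ := by
  have hφ_nonneg (ω : Ω) : 0 ≤ φ |X ω| := hφ0.trans (hφ (abs_nonneg _))
  have hnonneg (ω : Ω) : 0 ≤ φ |X ω| * X ω ^ 2 := mul_nonneg (hφ_nonneg ω) (sq_nonneg _)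
  rw [← ENNReal.ofReal_le_ofReal_iff (integral_nonneg hnonneg), ← enorm_eq_ofReal_abs]
  calc ‖∫ t in S, F t * steinKernel μ X t‖ₑ
      ≤ ∫⁻ t in S, ‖F t * steinKernel μ X t‖ₑ := enorm_integral_le_lintegral_enorm _
    _ ≤ ∫⁻ t in S, ENNReal.ofReal (φ |t|) * ‖steinKernel μ X t‖ₑ := by
        refine setLIntegral_mono' hS fun t ht => ?_
        rw [enorm_mul, enorm_eq_ofReal_abs (F t)]
        gcongr
        exact hF t ht
    _ ≤ ∫⁻ t, ENNReal.ofReal (φ |t|) * ‖steinKernel μ X t‖ₑ := setLIntegral_le_lintegral _ _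
    _ ≤ ∫⁻ ω, ENNReal.ofReal (φ |X ω|) * ‖X ω‖ₑ ^ 2 ∂μ :=
        lintegral_mul_enorm_steinKernel_le (ENNReal.ofReal_mono.comp hφ) hX
    _ = ∫⁻ ω, ENNReal.ofReal (φ |X ω| * X ω ^ 2) ∂μ := by
        refine lintegral_congr fun ω => ?_
        rw [ENNReal.ofReal_mul (hφ_nonneg ω), enorm_eq_ofReal_abs,
          ← ENNReal.ofReal_pow (abs_nonneg _), sq_abs]
    _ = ENNReal.ofReal (∫ ω, φ |X ω| * X ω ^ 2 ∂μ) :=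
        (ofReal_integral_eq_lintegral_ofReal hint (.of_forall hnonneg)).symm

end SteinKernel

section Decoupling

variable {Ω : Type*} {mΩ : MeasurableSpace Ω} {μ : Measure Ω} [IsProbabilityMeasure μ]
  {W X : Ω → ℝ}

lemma abs_integral_mul_fz_sub_mul_fz_le (z : ℝ) (hindep : IndepFun W X μ)
    (hW : Integrable (fun ω => exp (W ω)) μ) (hX : AEMeasurable X μ)
    (hle : ∀ᵐ ω ∂μ, X ω ≤ 1) {t : ℝ} (ht : t ≤ 1) :
    |∫ ω, ((W ω + X ω) * fz z (W ω + X ω) - (W ω + t) * fz z (W ω + t)) ∂μ|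
      ≤ 5 * exp (-z / 2) * (1 + exp 1 * ∫ ω, exp (W ω) ∂μ)
        * (∫ ω, min 1 |X ω| ∂μ + min 1 |t|) := by
  have hweight : Integrable (fun ω => 1 + exp 1 * exp (W ω)) μ :=
    (integrable_const 1).add (hW.const_mul _)
  have hgap : Integrable (fun ω => min 1 |X ω| + min 1 |t|) μ :=
    (integrable_min_one_abs hX).add (integrable_const _)
  have hindep_weight : IndepFun (fun ω => 1 + exp 1 * exp (W ω))
      (fun ω => min 1 |X ω| + min 1 |t|) μ :=
    hindep.comp (φ := fun w => 1 + exp 1 * exp w) (ψ := fun x => min 1 |x| + min 1 |t|)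
      (by fun_prop) (by fun_prop)
  have hpointwise : ∀ᵐ ω ∂μ,
      ‖(W ω + X ω) * fz z (W ω + X ω) - (W ω + t) * fz z (W ω + t)‖
        ≤ 5 * exp (-z / 2) * ((1 + exp 1 * exp (W ω)) * (min 1 |X ω| + min 1 |t|)) := by
    filter_upwards [hle] with ω hω
    refine (abs_mul_fz_sub_mul_fz_le z (M := 1 + W ω) (by linarith) (by linarith)).trans ?_
    rw [exp_add, add_sub_add_left_eq_sub, mul_assoc]
    gcongr
    exact min_one_abs_sub_le (X ω) t
  have hbound := norm_integral_le_of_norm_le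
    ((hindep_weight.integrable_mul hweight hgap).const_mul (5 * exp (-z / 2))) hpointwise
  simp only [Pi.mul_apply] at hbound
  rwa [integral_const_mul, hindep_weight.integral_fun_mul_eq_mul_integral
    hweight.aestronglyMeasurable hgap.aestronglyMeasurable,
    integral_add (integrable_const 1) (hW.const_mul _), integral_const_mul,
    integral_add (integrable_min_one_abs hX) (integrable_const _), integral_const, integral_const,
    probReal_univ, one_smul, one_smul, ← mul_assoc] at hbound

lemma abs_integral_Iic_mul_steinKernel_le (z : ℝ) (hindep : IndepFun W X μ)
    (hW : Integrable (fun ω => exp (W ω)) μ) (hX : MemLp X 2 μ) (hle : ∀ᵐ ω ∂μ, X ω ≤ 1) :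
    |∫ t in Set.Iic (1 : ℝ),
        (∫ ω, ((W ω + X ω) * fz z (W ω + X ω) - (W ω + t) * fz z (W ω + t)) ∂μ)
          * steinKernel μ X t|
      ≤ 10 * exp (-z / 2) * (1 + exp 1 * ∫ ω, exp (W ω) ∂μ)
        * ∫ ω, min 1 |X ω| * X ω ^ 2 ∂μ := by
  set C := 5 * exp (-z / 2) * (1 + exp 1 * ∫ ω, exp (W ω) ∂μ)
  set m := ∫ ω, min 1 |X ω| ∂μ
  have hC_nonneg : 0 ≤ C := by
    have : 0 ≤ ∫ ω, exp (W ω) ∂μ := integral_nonneg fun ω => (exp_pos _).le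
    positivity
  have hm_nonneg : 0 ≤ m := integral_nonneg fun ω => min_one_abs_nonneg _
  have hint : Integrable (fun ω => C * (m * X ω ^ 2)) μ :=
    (hX.integrable_sq.const_mul m).const_mul C
  have hint' : Integrable (fun ω => C * (min 1 |X ω| * X ω ^ 2)) μ :=
    (integrable_min_one_abs_mul_sq hX).const_mul C
  have hexpand (ω : Ω) : C * (m + min 1 |X ω|) * X ω ^ 2
      = C * (m * X ω ^ 2) + C * (min 1 |X ω| * X ω ^ 2) := by ring
  refine (abs_setIntegral_mul_steinKernel_le (φ := fun s => C * (m + min 1 s))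
    ((monotone_min_one.const_add m).const_mul hC_nonneg)
    (by simpa using mul_nonneg hC_nonneg hm_nonneg)
    hX.aemeasurable ((hint.add hint').congr (.of_forall fun ω => (hexpand ω).symm))
    measurableSet_Iic
    fun t ht => abs_integral_mul_fz_sub_mul_fz_le z hindep hW hX.aemeasurable hle ht).trans ?_
  simp_rw [hexpand]
  rw [integral_add hint hint', integral_const_mul, integral_const_mul, integral_const_mul]
  linarith [mul_le_mul_of_nonneg_left (integral_min_one_abs_mul_integral_sq_le hX) hC_nonneg]

end Decoupling

section Truncation

variable {Ω : Type*} {n : ℕ} (ξ : Fin n → Ω → ℝ) (i : Fin n) (ω : Ω)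

lemma xbar_le_one : xbar ξ i ω ≤ 1 := by
  rw [xbar]
  split_ifs with h
  exacts [h, zero_le_one]

lemma xbar_le : xbar ξ i ω ≤ ξ i ω := by
  rw [xbar]
  split_ifs with h
  exacts [le_rfl, by linarith]

lemma abs_xbar_le : |xbar ξ i ω| ≤ |ξ i ω| := by
  rw [xbar]
  split_ifs
  exacts [le_rfl, by simp]

lemma min_one_abs_xbar_mul_sq_le :
    min 1 |xbar ξ i ω| * xbar ξ i ω ^ 2
      ≤ (if 1 < |ξ i ω| then ξ i ω ^ 2 else 0) + if |ξ i ω| ≤ 1 then |ξ i ω| ^ 3 else 0 := by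
  have hsq : xbar ξ i ω ^ 2 ≤ ξ i ω ^ 2 := sq_le_sq.2 (abs_xbar_le ξ i ω)
  rcases lt_or_ge 1 |ξ i ω| with h | h
  · rw [if_pos h, if_neg h.not_ge, add_zero]
    exact (mul_le_of_le_one_left (sq_nonneg _) (min_le_left _ _)).trans hsq
  · rw [if_neg h.not_gt, if_pos h, zero_add]
    calc min 1 |xbar ξ i ω| * xbar ξ i ω ^ 2 ≤ |ξ i ω| * ξ i ω ^ 2 :=
          mul_le_mul ((min_le_right _ _).trans (abs_xbar_le ξ i ω)) hsq (sq_nonneg _)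
            (abs_nonneg _)
      _ = |ξ i ω| ^ 3 := by rw [← sq_abs]; ring

lemma Wbari_eq_sum_erase : Wbari ξ i = ∑ j ∈ Finset.univ.erase i, xbar ξ j := by
  funext ω
  rw [Finset.sum_apply, Wbari, Wbar, ← Finset.sum_erase_add _ _ (Finset.mem_univ i),
    add_sub_cancel_right]

end Truncation

section TruncatedSum

variable {Ω : Type*} [MeasureSpace Ω] {n : ℕ} {ξ : Fin n → Ω → ℝ}

lemma measurable_ite_le_one : Measurable fun x : ℝ => if x ≤ 1 then x else 0 :=
  measurable_id.ite measurableSet_Iic measurable_const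

lemma Kbar_eq_steinKernel (ξ : Fin n → Ω → ℝ) (i : Fin n) :
    Kbar ξ i = steinKernel ℙ (xbar ξ i) := rfl

lemma memLp_xbar {i : Fin n} (hL2 : MemLp (ξ i) 2 ℙ) : MemLp (xbar ξ i) 2 ℙ :=
  hL2.mono (measurable_ite_le_one.comp_aemeasurable hL2.aemeasurable).aestronglyMeasurable
    (.of_forall (abs_xbar_le ξ i))

lemma iIndepFun_xbar (hindep : iIndepFun ξ ℙ) : iIndepFun (xbar ξ) ℙ :=
  hindep.comp _ fun _ => measurable_ite_le_one

lemma integral_xbar_nonpos [IsFiniteMeasure (ℙ : Measure Ω)] {i : Fin n}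
    (hL2 : MemLp (ξ i) 2 ℙ) (hmean : ∫ ω, ξ i ω ≤ 0) : ∫ ω, xbar ξ i ω ≤ 0 :=
  (integral_mono ((memLp_xbar hL2).integrable one_le_two) (hL2.integrable one_le_two)
    (xbar_le ξ i)).trans hmean

lemma indepFun_Wbari_xbar (hindep : iIndepFun ξ ℙ) (hξ : ∀ i, AEMeasurable (ξ i))
    (i : Fin n) : IndepFun (Wbari ξ i) (xbar ξ i) ℙ := by
  rw [Wbari_eq_sum_erase]
  exact (iIndepFun_xbar hindep).indepFun_finsetSum_of_notMem₀
    (fun j => measurable_ite_le_one.comp_aemeasurable (hξ j)) (Finset.notMem_erase i _)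

lemma integral_exp_Wbari_le [IsProbabilityMeasure (ℙ : Measure Ω)] (hindep : iIndepFun ξ ℙ)
    (hL2 : ∀ i, MemLp (ξ i) 2 ℙ) (hmean : ∀ i, ∫ ω, ξ i ω ≤ 0)
    (hvar : ∑ i, ∫ ω, ξ i ω ^ 2 ≤ 1) (i : Fin n) : ∫ ω, exp (Wbari ξ i ω) ≤ exp 1 := by
  have hsq (j : Fin n) : ∫ ω, xbar ξ j ω ^ 2 ≤ ∫ ω, ξ j ω ^ 2 :=
    integral_mono (memLp_xbar (hL2 j)).integrable_sq (hL2 j).integrable_sq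
      fun ω => sq_le_sq.2 (abs_xbar_le ξ j ω)
  rw [Wbari_eq_sum_erase]
  refine (integral_exp_sum_le_exp_sum_integral_sq (iIndepFun_xbar hindep)
    (fun j => memLp_xbar (hL2 j)) (fun j => .of_forall (xbar_le_one ξ j))
    (fun j => integral_xbar_nonpos (hL2 j) (hmean j)) _).trans (exp_le_exp.2 ?_)
  calc ∑ j ∈ Finset.univ.erase i, ∫ ω, xbar ξ j ω ^ 2
      ≤ ∑ j ∈ Finset.univ.erase i, ∫ ω, ξ j ω ^ 2 := Finset.sum_le_sum fun j _ => hsq j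
    _ ≤ ∑ j, ∫ ω, ξ j ω ^ 2 :=
        Finset.sum_le_sum_of_subset_of_nonneg (Finset.erase_subset _ _)
          fun j _ _ => integral_nonneg fun ω => sq_nonneg _
    _ ≤ 1 := hvar

lemma sum_integral_min_one_abs_xbar_mul_sq_le [IsFiniteMeasure (ℙ : Measure Ω)]
    (hL2 : ∀ i, MemLp (ξ i) 2 ℙ) :
    ∑ i, ∫ ω, min 1 |xbar ξ i ω| * xbar ξ i ω ^ 2 ≤ beta2 ξ + beta3 ξ := by
  rw [beta2, beta3, ← Finset.sum_add_distrib]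
  refine Finset.sum_le_sum fun i _ => ?_
  have hint₂ := integrable_ite_one_lt_abs_sq (hL2 i)
  have hint₃ := integrable_ite_abs_le_one_cube (hL2 i).aemeasurable
  rw [← integral_add hint₂ hint₃]
  exact integral_mono (integrable_min_one_abs_mul_sq (memLp_xbar (hL2 i))) (hint₂.add hint₃)
    (min_one_abs_xbar_mul_sq_le ξ i)

lemma beta2_nonneg (ξ : Fin n → Ω → ℝ) : 0 ≤ beta2 ξ :=
  Finset.sum_nonneg fun i _ => integral_nonneg fun ω => by dsimp only; split_ifs <;> positivity

lemma beta3_nonneg (ξ : Fin n → Ω → ℝ) : 0 ≤ beta3 ξ :=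
  Finset.sum_nonneg fun i _ => integral_nonneg fun ω => by dsimp only; split_ifs <;> positivity

end TruncatedSum

section MainBound

variable {Ω : Type*} [MeasureSpace Ω] [IsProbabilityMeasure (ℙ : Measure Ω)] {n : ℕ}

lemma abs_integral_Iic_mul_Kbar_le {ξ : Fin n → Ω → ℝ} (hindep : iIndepFun ξ ℙ)
    (hL2 : ∀ i, MemLp (ξ i) 2 ℙ) (hmean : ∀ i, ∫ ω, ξ i ω ≤ 0)
    (hvar : ∑ i, ∫ ω, ξ i ω ^ 2 ≤ 1) (z : ℝ) (i : Fin n) :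
    |∫ t in Set.Iic (1 : ℝ),
        (∫ ω, ((Wbari ξ i ω + xbar ξ i ω) * fz z (Wbari ξ i ω + xbar ξ i ω)
          - (Wbari ξ i ω + t) * fz z (Wbari ξ i ω + t))) * Kbar ξ i t|
      ≤ 90 * exp (-z / 2) * ∫ ω, min 1 |xbar ξ i ω| * xbar ξ i ω ^ 2 := by
  have hxbar (j : Fin n) := memLp_xbar (hL2 j)
  have hexp_int : Integrable fun ω => exp (Wbari ξ i ω) := by
    rw [Wbari_eq_sum_erase]
    exact integrable_exp_sum_of_le_one (fun j => (hxbar j).aemeasurable)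
      (fun j => .of_forall (xbar_le_one ξ j)) _
  have hweight : 1 + exp 1 * ∫ ω, exp (Wbari ξ i ω) ≤ 9 := by
    have := integral_exp_Wbari_le hindep hL2 hmean hvar i
    nlinarith [exp_one_lt_d9, exp_pos 1]
  have hmoment : 0 ≤ ∫ ω, min 1 |xbar ξ i ω| * xbar ξ i ω ^ 2 :=
    integral_nonneg fun ω => mul_nonneg (min_one_abs_nonneg _) (sq_nonneg _)
  rw [Kbar_eq_steinKernel]
  refine (abs_integral_Iic_mul_steinKernel_le z
    (indepFun_Wbari_xbar hindep (fun j => (hL2 j).aemeasurable) i) hexp_int (hxbar i)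
    (.of_forall (xbar_le_one ξ i))).trans (mul_le_mul_of_nonneg_right ?_ hmoment)
  linarith [mul_le_mul_of_nonneg_left hweight (exp_pos (-z / 2)).le]

theorem R22_bound_general (ξ : Fin n → Ω → ℝ) (hindep : iIndepFun ξ ℙ)
    (hL2 : ∀ i, MemLp (ξ i) 2 ℙ) (hmean : ∀ i, ∫ ω, ξ i ω ≤ 0)
    (hvar : ∑ i, ∫ ω, ξ i ω ^ 2 ≤ 1) (z : ℝ) :
    |∑ i, ∫ t in Set.Iic (1 : ℝ),
        (∫ ω, ((Wbari ξ i ω + xbar ξ i ω) * fz z (Wbari ξ i ω + xbar ξ i ω)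
          - (Wbari ξ i ω + t) * fz z (Wbari ξ i ω + t))) * Kbar ξ i t|
      ≤ 90 * exp (-z / 2) * (beta2 ξ + beta3 ξ) := by
  refine (Finset.abs_sum_le_sum_abs _ _).trans ?_
  calc _ ≤ ∑ i, 90 * exp (-z / 2) * ∫ ω, min 1 |xbar ξ i ω| * xbar ξ i ω ^ 2 :=
        Finset.sum_le_sum fun i _ => abs_integral_Iic_mul_Kbar_le hindep hL2 hmean hvar z i
    _ = 90 * exp (-z / 2) * ∑ i, ∫ ω, min 1 |xbar ξ i ω| * xbar ξ i ω ^ 2 :=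
        (Finset.mul_sum _ _ _).symm
    _ ≤ 90 * exp (-z / 2) * (beta2 ξ + beta3 ξ) := by
        gcongr
        exact sum_integral_min_one_abs_xbar_mul_sq_le hL2

end MainBound

/-- Bound on R22. -/
theorem R22_bound
    {Ω : Type*} [MeasureSpace Ω] [IsProbabilityMeasure (ℙ : Measure Ω)]
    {n : ℕ} (ξ : Fin n → Ω → ℝ)
    (hmeas : ∀ i, Measurable (ξ i))
    (hindep : iIndepFun ξ ℙ)
    (hL2 : ∀ i, MemLp (ξ i) 2 ℙ)
    (hmean : ∀ i, ∫ ω, ξ i ω = 0)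
    (hvar : ∑ i, ∫ ω, (ξ i ω) ^ 2 = 1)
    (z : ℝ) (hz : 2 < z) :
    |∑ i, ∫ t in Set.Iic (1 : ℝ),
        (∫ ω, ((Wbari ξ i ω + xbar ξ i ω) * fz z (Wbari ξ i ω + xbar ξ i ω)
          - (Wbari ξ i ω + t) * fz z (Wbari ξ i ω + t))) * Kbar ξ i t|
      ≤ (103.2 + 80 * Real.exp (Real.exp 1 ^ 2 - 2) / Real.sqrt (2 * Real.pi))
          * Real.exp (-z / 2) * (beta2 ξ + beta3 ξ) := by
  refine (R22_bound_general ξ hindep hL2 (fun i => (hmean i).le) hvar.le z).trans ?_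
  gcongr
  exacts [add_nonneg (beta2_nonneg ξ) (beta3_nonneg ξ),
    le_add_of_le_of_nonneg (by norm_num) (by positivity)]
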